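/- The group P_4 is generated by c_{11}, c_{21}, c_{12}, c_{31}, c_{22}, c_{13}, and the map sending abstract generators x_{11}, x_{21}, x_{12}, x_{31}, x_{22}, x_{13} to c_{11}, c_{21}, c_{12}, c_{31}, c_{22}, c_{13} induces an isomorphism onto P_4 from the group presented by these six generators and the relations (for ε = ±1): x_{21}^{x_{11}^ε} = x_{21}, x_{12}^{x_{11}^ε} = x_{12}^{x_{21}^{−ε}}, x_{31}^{x_{11}^ε} = x_{31}, x_{22}^{x_{11}^ε} = x_{22}, x_{13}^{x_{11}^ε} = x_{13}^{x_{22}^{−ε}}; x_{31}^{x_{21}^ε} = x_{31}, x_{22}^{x_{21}^ε} = x_{22}^{x_{31}^{−ε}}, x_{13}^{x_{21}^ε} = x_{13}^{x_{22}^{ε} x_{31}^{−ε}}; x_{31}^{x_{12}^ε} = x_{31}, x_{13}^{x_{12}^ε} = x_{13}^{x_{31}^{−ε}}; x_{22}^{x_{12}^{−1}} = x_{13}^{x_{31}} · (x_{13}^{x_{22}})^{−1} · x_{22} · [x_{21}^2, x_{12}^{−1}]; x_{22}^{x_{12}} = [x_{12}, x_{21}^{−2}] · (x_{13}^{x_{22}^{−2}})^{−1}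 · x_{22} · x_{13}^{x_{31}^{−1}}. -/

import Mathlib

/-!
Both presentations are rewritten as lists of eleven commutation relations. For `ε = ±1`, a relation
`b^{-ε} a b^ε = c^ε a c^{-ε}` says that `a` commutes with `b^ε c^ε`, and in each case the two signs
are consequences of one commutation, because `b` and `c` commute or, for the remaining family of
pure braid relations and the relation for `x_{13}^{x_{21}^ε}`, because the elements for
the two signs are inverse to each other. This gives `PureRel` for `P_4` (`p4Rels_iff`) and `CRel`
for the second presentation (`rels_iff`). The two long relations in the second presentation are,
modulo the others, both equivalent to `x_{12} x_{13}⁻¹` commuting with `x_{11}² x_{22} x_{12}⁻¹`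
(`long_iff`).

The expressions of the `c_{ij}` in the `A_{ij}` are triangular, hence invertible already in the free
group, and this change of generators carries `PureRel` to `CRel` and back (`PureRel.cRel`,
`CRel.pureRel`). In both directions the main point is that the full twist
`A₁₂ (A₁₃ A₂₃) (A₁₄ A₂₄ A₃₄) = (c₃₁ c₂₁ c₁₁)⁻¹` is central. Von Dyck's theorem then provides
homomorphisms both ways, inverse to each other on generators.
-/
namespace Paper

/-- Generators `A_{i,j}`, `1 ≤ i < j ≤ 4`, of the pure braid group `P_4`. -/
abbrev PGen := {p : ℕ × ℕ // 1 ≤ p.1 ∧ p.1 < p.2 ∧ p.2 ≤ 4}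

/-- The generator `A_{i,j}` as an element of the free group (junk value `1` out of range). -/
def fA (i j : ℕ) : FreeGroup PGen :=
  if h : 1 ≤ i ∧ i < j ∧ j ≤ 4 then FreeGroup.of ⟨(i, j), h⟩ else 1

/-- Conjugation `a^b = b⁻¹ * a * b`. -/
def cj {G : Type*} [Group G] (a b : G) : G := b⁻¹ * a * b

/-- Commutator `[a, b] = a⁻¹ * b⁻¹ * a * b`. -/
def cm {G : Type*} [Group G] (a b : G) : G := a⁻¹ * b⁻¹ * a * b

/-- The defining relations of the pure braid group `P_4` (`ε = ±1`):
`A_{i,k}^{-ε}A_{k,j}A_{i,k}^{ε} = (A_{i,j}A_{k,j})^{ε}A_{k,j}(A_{i,j}A_{k,j})^{-ε}` for `i<k<j`;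
`A_{k,m}^{-ε}A_{k,j}A_{k,m}^{ε} = (A_{k,j}A_{m,j})^{ε}A_{k,j}(A_{k,j}A_{m,j})^{-ε}` for `k<m<j`;
`A_{i,m}^{-ε}A_{k,j}A_{i,m}^{ε} = [A_{i,j}^{-ε},A_{m,j}^{-ε}]^{ε}A_{k,j}[A_{i,j}^{-ε},A_{m,j}^{-ε}]^{-ε}`
for `i<k<m<j`; and `A_{i,m}^{-ε}A_{k,j}A_{i,m}^{ε} = A_{k,j}` for `k<i, m<j`, or `m<k`. -/
def P4Rels : Set (FreeGroup PGen) :=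
  {r | ∃ e : ℤ, (e = 1 ∨ e = -1) ∧
    ((∃ i k j : ℕ, 1 ≤ i ∧ i < k ∧ k < j ∧ j ≤ 4 ∧
        r = (fA i k) ^ (-e) * fA k j * (fA i k) ^ e *
            ((fA i j * fA k j) ^ e * fA k j * (fA i j * fA k j) ^ (-e))⁻¹) ∨
     (∃ k m j : ℕ, 1 ≤ k ∧ k < m ∧ m < j ∧ j ≤ 4 ∧
        r = (fA k m) ^ (-e) * fA k j * (fA k m) ^ e *
            ((fA k j * fA m j) ^ e * fA k j * (fA k j * fA m j) ^ (-e))⁻¹) ∨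
     (∃ i k m j : ℕ, 1 ≤ i ∧ i < k ∧ k < m ∧ m < j ∧ j ≤ 4 ∧
        r = (fA i m) ^ (-e) * fA k j * (fA i m) ^ e *
            ((cm ((fA i j) ^ (-e)) ((fA m j) ^ (-e))) ^ e * fA k j *
             (cm ((fA i j) ^ (-e)) ((fA m j) ^ (-e))) ^ (-e))⁻¹) ∨
     (∃ i m k j : ℕ, 1 ≤ i ∧ i < m ∧ m ≤ 4 ∧ 1 ≤ k ∧ k < j ∧ j ≤ 4 ∧
        ((k < i ∧ m < j) ∨ m < k) ∧
        r = (fA i m) ^ (-e) * fA k j * (fA i m) ^ e * (fA k j)⁻¹))}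

/-- The pure braid group `P_4`, given by its presentation. -/
abbrev P4 := PresentedGroup P4Rels

/-- The generator `A_{i,j}` as an element of `P_4` (junk value `1` out of range). -/
def pA (i j : ℕ) : P4 :=
  if h : 1 ≤ i ∧ i < j ∧ j ≤ 4 then PresentedGroup.of ⟨(i, j), h⟩ else 1

/-- `c_{11} = A_{12}⁻¹`. -/
def c11 : P4 := (pA 1 2)⁻¹
/-- `c_{21} = A_{23}⁻¹A_{13}⁻¹`. -/
def c21 : P4 := (pA 2 3)⁻¹ * (pA 1 3)⁻¹
/-- `c_{12} = A_{13}⁻¹A_{12}⁻¹`. -/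
def c12 : P4 := (pA 1 3)⁻¹ * (pA 1 2)⁻¹
/-- `c_{31} = A_{34}⁻¹A_{24}⁻¹A_{14}⁻¹`. -/
def c31 : P4 := (pA 3 4)⁻¹ * (pA 2 4)⁻¹ * (pA 1 4)⁻¹
/-- `c_{22} = A_{24}⁻¹A_{14}⁻¹A_{23}⁻¹A_{13}⁻¹`. -/
def c22 : P4 := (pA 2 4)⁻¹ * (pA 1 4)⁻¹ * (pA 2 3)⁻¹ * (pA 1 3)⁻¹
/-- `c_{13} = A_{14}⁻¹A_{13}⁻¹A_{12}⁻¹`. -/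
def c13 : P4 := (pA 1 4)⁻¹ * (pA 1 3)⁻¹ * (pA 1 2)⁻¹


/-- Abstract generators for the presentation of `P_4` in Proposition 4.1. -/
inductive CGen
  | x11 | x21 | x12 | x31 | x22 | x13
  deriving DecidableEq

namespace CGen
open FreeGroup
/-- The defining relations of Proposition 4.1 (for `ε = ±1`). -/
def rels : Set (FreeGroup CGen) :=
  {r | (∃ e : ℤ, (e = 1 ∨ e = -1) ∧
        r ∈ [cj (of x21) (of x11 ^ e) * (of x21)⁻¹,
             cj (of x12) (of x11 ^ e) * (cj (of x12) (of x21 ^ (-e)))⁻¹,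
             cj (of x31) (of x11 ^ e) * (of x31)⁻¹,
             cj (of x22) (of x11 ^ e) * (of x22)⁻¹,
             cj (of x13) (of x11 ^ e) * (cj (of x13) (of x22 ^ (-e)))⁻¹,
             cj (of x31) (of x21 ^ e) * (of x31)⁻¹,
             cj (of x22) (of x21 ^ e) * (cj (of x22) (of x31 ^ (-e)))⁻¹,
             cj (of x13) (of x21 ^ e) * (cj (of x13) (of x22 ^ e * of x31 ^ (-e)))⁻¹,
             cj (of x31) (of x12 ^ e) * (of x31)⁻¹,
             cj (of x13) (of x12 ^ e) * (cj (of x13) (of x31 ^ (-e)))⁻¹]) ∨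
       r = cj (of x22) (of x12)⁻¹ *
           (cj (of x13) (of x31) * (cj (of x13) (of x22))⁻¹ * of x22 *
            cm (of x21 ^ (2 : ℤ)) (of x12)⁻¹)⁻¹ ∨
       r = cj (of x22) (of x12) *
           (cm (of x12) (of x21 ^ (-2 : ℤ)) * (cj (of x13) (of x22 ^ (-2 : ℤ)))⁻¹ * of x22 *
            cj (of x13) (of x31)⁻¹)⁻¹}
end CGen

/-! ### Both presentations as commutation relations -/

section Commutation

variable {G : Type*} [Group G]

/-- The pure braid relations among elements `aij` of a group, rewritten as commutations: two
for each triple `i < k < j`, which together say that `aik * aij * akj` commutes with `aik`, `aij`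
and `akj`, and three involving all four strands. -/
structure PureRel (a12 a13 a14 a23 a24 a34 : G) : Prop where
  t123 : Commute a23 (a12 * a13)
  t123' : Commute a13 (a12 * (a13 * a23))
  t124 : Commute a24 (a12 * a14)
  t124' : Commute a14 (a12 * (a14 * a24))
  t134 : Commute a34 (a13 * a14)
  t134' : Commute a14 (a13 * (a14 * a34))
  t234 : Commute a34 (a23 * a24)
  t234' : Commute a24 (a23 * (a24 * a34))
  k12_34 : Commute a12 a34
  k23_14 : Commute a23 a14
  k13_24 : Commute a24 (a34 * a13 * a34⁻¹)

/-- The relations of the second presentation, rewritten as commutations among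
`s = x11`, `t = x21`, `u = x12`, `p = x31`, `q = x22`, `r = x13`. The product `s * t * p` is
central; it is the inverse of the full twist. In terms of braids `u * r⁻¹` is `A_{1,4}`, so that
`last` is a commutation with `A_{1,4}`. -/
structure CRel (s t u p q r : G) : Prop where
  s_t : Commute s t
  s_p : Commute s p
  s_q : Commute s q
  t_p : Commute t p
  u_p : Commute u p
  u_st : Commute u (s * t)
  q_tp : Commute q (t * p)
  r_sq : Commute r (s * q)
  r_up : Commute r (u * p)
  r_z : Commute r (s * t * p)
  last : Commute (u * r⁻¹) (s ^ 2 * q * u⁻¹)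

/-- With `(x, y, z) = (aik, aij, akj)`, the two relations of a triple make `x * y * z` central in
the subgroup generated by `x, y, z`, so each of the three commutes with the product of the other
two in the appropriate cyclic order. -/
lemma triple {x y z : G} (h1 : Commute z (x * y)) (h2 : Commute y (x * (y * z))) :
    Commute x (y * z) ∧ Commute y (z * x) := by
  have hz : Commute z (x * (y * z)) := by
    rw [← mul_assoc]; exact h1.mul_right (.refl z)
  have hx : Commute x (x * (y * z)) := by
    have := ((Commute.refl (x * (y * z))).mul_right (h2.symm.mul_right hz.symm).inv_right).symm
    rwa [mul_inv_cancel_right] at this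
  have hx' : Commute x (y * z) := by
    have := (Commute.refl x).inv_right.mul_right hx
    rwa [inv_mul_cancel_left] at this
  refine ⟨hx', ?_⟩
  rw [hx'.eq, mul_assoc] at h2
  have := (Commute.refl y).inv_right.mul_right h2
  rwa [inv_mul_cancel_left] at this

/-- A partial converse of `triple`: the commutation of `z` follows from those of `x` and `y`. -/
lemma triple_symm {x y z : G} (h1 : Commute x (y * z)) (h2 : Commute y (x * (y * z))) :
    Commute z (x * y) := by
  have hx : Commute x (x * (y * z)) := (Commute.refl x).mul_right h1
  have hz : Commute z (x * (y * z)) := by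
    have := (hx.symm.mul_right h2.symm).inv_right.mul_right (Commute.refl (x * (y * z)))
    rw [show (x * y)⁻¹ * (x * (y * z)) = z by group] at this
    exact this.symm
  have := hz.mul_right (Commute.refl z).inv_right
  rwa [show x * (y * z) * z⁻¹ = x * y by group] at this

/-- The braid that must commute with `A_{1,4}` in `CRel.last` is, up to inversion,
`a23 * (a14 * a24 * a12)`. -/
lemma last_eq {a12 a13 a14 a23 a24 : G} (SQ : Commute a12 (a13 * (a23 * (a14 * a24)))) :
    (a12⁻¹ ^ 2 * (a24⁻¹ * a14⁻¹ * a23⁻¹ * a13⁻¹) * (a13⁻¹ * a12⁻¹)⁻¹)⁻¹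
      = a23 * (a14 * a24 * a12) := by
  calc _ = a13⁻¹ * a12⁻¹ * (a13 * (a23 * (a14 * a24)) * a12) * a12 := by
        simp only [mul_inv_rev, inv_inv, pow_two, mul_assoc]
    _ = _ := by rw [← SQ.eq]; group

/-- The elements `c11, c21, c12, c31, c22, c13` built from pure braid generators satisfy `CRel`.
The full twist `Z` is shown to be central; then `(s * q)⁻¹ = Z * a34⁻¹` and
`(u * p)⁻¹ = Z * a23⁻¹`, which reduces the relations of `r` to commutations with `a34` and `a23`. -/
lemma PureRel.cRel {a12 a13 a14 a23 a24 a34 : G} (h : PureRel a12 a13 a14 a23 a24 a34) :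
    CRel a12⁻¹ (a23⁻¹ * a13⁻¹) (a13⁻¹ * a12⁻¹) (a34⁻¹ * a24⁻¹ * a14⁻¹)
      (a24⁻¹ * a14⁻¹ * a23⁻¹ * a13⁻¹) (a14⁻¹ * a13⁻¹ * a12⁻¹) := by
  obtain ⟨h123, h123', h124, h124', h134, h134', h234, h234', h1234, h2314, h1324⟩ := h
  have ST := (triple h123 h123').1
  have S_1424 := (triple h124 h124').1
  have a13_1434 := (triple h134 h134').1
  have a14_3413 := (triple h134 h134').2
  have a23_2434 := (triple h234 h234').1
  have SP : Commute a12 (a14 * a24 * a34) := S_1424.mul_right h1234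
  have a23P : Commute a23 (a14 * a24 * a34) := by
    rw [mul_assoc]; exact h2314.mul_right a23_2434
  have a13P : Commute a13 (a14 * a24 * a34) := by
    have : Commute a13 (a34⁻¹ * a24 * a34) := by
      have := (Commute.conj_iff (a34⁻¹)).2 h1324.symm
      rwa [inv_inv, show a34⁻¹ * (a34 * a13 * a34⁻¹) * a34 = a13 by group] at this
    have := a13_1434.mul_right this
    rwa [show a14 * a34 * (a34⁻¹ * a24 * a34) = a14 * a24 * a34 by group] at this
  have TP : Commute (a13 * a23) (a14 * a24 * a34) := a13P.mul_left a23P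
  have UP : Commute (a12 * a13) (a14 * a24 * a34) := SP.mul_left a13P
  have UST : Commute (a12 * a13) (a12 * (a13 * a23)) :=
    ((Commute.refl a12).mul_right ST).mul_left h123'
  set Z := a12 * (a13 * a23) * (a14 * a24 * a34) with hZ
  have e1 : a13 * a14 * a34 * (a34⁻¹ * (a23 * a24) * a34)
      = a13 * a23 * (a14 * a24 * a34) := by
    simp only [mul_assoc, mul_inv_cancel_left]
    rw [← mul_assoc a14, ← h2314.eq]; group
  have a34_TP : Commute a34 (a13 * a23 * (a14 * a24 * a34)) := by
    rw [← e1]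
    exact (h134.mul_right (.refl _)).mul_right
      (((Commute.refl _).inv_right.mul_right h234).mul_right (.refl _))
  have a34Z : Commute a34 Z := by
    rw [hZ, mul_assoc]; exact h1234.symm.mul_right a34_TP
  have SZ : Commute a12 Z := ((Commute.refl a12).mul_right ST).mul_right SP
  have UZ : Commute (a12 * a13) Z := UST.mul_right UP
  -- conjugating by `a34`, which commutes with `Z`, moves the last factor `a34` to the front
  have eZ : Z = a34 * a13 * a23 * (a14 * a24 * a12) := by
    have : Z = a13 * a23 * (a14 * a24 * a12) * a34 := by
      rw [hZ, mul_assoc, (ST.mul_right SP).eq]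
      simp only [mul_assoc, h1234.eq]
    have := (a34Z.inv_left.eq.trans (congrArg (· * a34⁻¹) this))
    rw [mul_inv_cancel_right, inv_mul_eq_iff_eq_mul] at this
    simpa only [mul_assoc] using this
  have a14_m : Commute a14 (a14 * a24 * a12) := by
    rwa [← S_1424.eq]
  have a14Z : Commute a14 Z := by
    rw [eZ]; exact (a14_3413.mul_right h2314.symm).mul_right a14_m
  have SQ : Commute a12 (a13 * a23 * (a14 * a24)) := ST.mul_right S_1424
  have RZ : Commute (a12 * a13 * a14) Z := UZ.mul_left a14Z
  have RSQ : Commute (a12 * a13 * a14) (a13 * a23 * (a14 * a24) * a12) := by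
    have R34 : Commute (a12 * a13 * a14) a34 := by
      rw [mul_assoc]; exact h1234.mul_left h134.symm
    have := RZ.mul_right R34.inv_right
    rw [← SQ.eq]
    rwa [show Z * a34⁻¹ = a12 * (a13 * a23 * (a14 * a24)) by rw [hZ]; group] at this
  have RUP : Commute (a12 * a13 * a14) (a14 * a24 * a34 * (a12 * a13)) := by
    have R23 : Commute (a12 * a13 * a14) a23 := h123.symm.mul_left h2314.symm
    have := RZ.mul_right R23.inv_right
    rw [← UP.eq]
    rwa [show Z * a23⁻¹ = a12 * a13 * (a14 * a24 * a34) by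
      rw [hZ, ← mul_assoc a12 a13, mul_assoc _ a23, a23P.eq]; group] at this
  have QTP : Commute (a13 * a23 * (a14 * a24)) (a14 * a24 * a34 * (a13 * a23)) := by
    have := (((Commute.refl (a13 * a23)).mul_right TP).mul_left
      (TP.symm.mul_right (Commute.refl _))).mul_left a34_TP.symm.symm.inv_left
    rw [← TP.eq]
    rwa [show a13 * a23 * (a14 * a24 * a34) * a34⁻¹ = a13 * a23 * (a14 * a24) by group] at this
  constructor
  · simpa only [← mul_inv_rev, Commute.inv_left_iff, Commute.inv_right_iff] using ST
  · simpa only [← mul_inv_rev, Commute.inv_left_iff, Commute.inv_right_iff, ← mul_assoc] using SP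
  · simpa only [← mul_inv_rev, Commute.inv_left_iff, Commute.inv_right_iff, ← mul_assoc] using SQ
  · simpa only [← mul_inv_rev, Commute.inv_left_iff, Commute.inv_right_iff, ← mul_assoc] using TP
  · simpa only [← mul_inv_rev, Commute.inv_left_iff, Commute.inv_right_iff, ← mul_assoc] using UP
  · rw [ST.eq] at UST
    simpa only [← mul_inv_rev, Commute.inv_left_iff, Commute.inv_right_iff, ← mul_assoc] using UST
  · simpa only [← mul_inv_rev, Commute.inv_left_iff, Commute.inv_right_iff, ← mul_assoc] using QTP
  · simpa only [← mul_inv_rev, Commute.inv_left_iff, Commute.inv_right_iff, ← mul_assoc] using RSQ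
  · simpa only [← mul_inv_rev, Commute.inv_left_iff, Commute.inv_right_iff, ← mul_assoc] using RUP
  · rw [hZ, ST.eq, (TP.mul_left SP).eq] at RZ
    simpa only [← mul_inv_rev, Commute.inv_left_iff, Commute.inv_right_iff, ← mul_assoc] using RZ
  · have SQ' : Commute a12 (a13 * (a23 * (a14 * a24))) := by rwa [← mul_assoc]
    have := (h2314.symm.mul_right a14_m).inv_right
    rw [← last_eq SQ', inv_inv] at this
    convert this using 1
    group

/-- The converse of `PureRel.cRel`. Centrality of the full twist `Z` again converts the relations of
`r` into commutations of `a12 * a13 * a14` with `a34` and `a23`. Then `a14` commutes with `a23`, so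
`CRel.last` yields the relations of the triple `1 < 2 < 4`. -/
lemma CRel.pureRel' {a12 a13 a14 a23 a24 a34 : G}
    (h : CRel a12⁻¹ (a23⁻¹ * a13⁻¹) (a13⁻¹ * a12⁻¹) (a34⁻¹ * a24⁻¹ * a14⁻¹)
      (a24⁻¹ * a14⁻¹ * a23⁻¹ * a13⁻¹) (a14⁻¹ * a13⁻¹ * a12⁻¹)) :
    PureRel a12 a13 a14 a23 a24 a34 := by
  obtain ⟨ST, SP, SQ, TP, UP, UST, QTP, RSQ, RUP, RZ, L⟩ := h
  simp only [← mul_inv_rev, Commute.inv_left_iff, Commute.inv_right_iff] at ST SP SQ TP UP UST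
  simp only [← mul_inv_rev, Commute.inv_left_iff, Commute.inv_right_iff] at QTP RSQ RUP RZ
  rw [← ST.eq] at UST
  rw [← TP.eq] at QTP
  rw [← SQ.eq] at RSQ
  rw [← UP.eq] at RUP
  rw [← ST.eq, ← (SP.mul_left TP).eq] at RZ
  set Z := a12 * (a13 * a23) * (a14 * (a24 * a34)) with hZ
  have SZ : Commute a12 Z := ((Commute.refl a12).mul_right ST).mul_right SP
  have TZ : Commute (a13 * a23) Z := (ST.symm.mul_right (.refl _)).mul_right TP
  have PZ : Commute (a14 * (a24 * a34)) Z := (SP.symm.mul_right TP.symm).mul_right (.refl _)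
  have UZ : Commute (a12 * a13) Z := UST.mul_right UP
  have QZ : Commute (a13 * (a23 * (a14 * a24))) Z := by
    rw [hZ, mul_assoc]; exact SQ.symm.mul_right QTP
  have a34Z : Commute a34 Z := by
    have := QZ.inv_left.mul_left (TZ.mul_left PZ)
    rwa [show (a13 * (a23 * (a14 * a24)))⁻¹ * (a13 * a23 * (a14 * (a24 * a34))) = a34 by
      group] at this
  have a23Z : Commute a23 Z := by
    have := UZ.inv_left.mul_left (SZ.mul_left TZ)
    rwa [show (a12 * a13)⁻¹ * (a12 * (a13 * a23)) = a23 by group] at this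
  have a14Z : Commute a14 Z := by
    have := UZ.inv_left.mul_left RZ
    rwa [show (a12 * a13)⁻¹ * (a12 * (a13 * a14)) = a14 by group] at this
  have h123' : Commute a13 (a12 * (a13 * a23)) := by
    have := ((Commute.refl a12).mul_right ST).inv_left.mul_left UST
    rwa [inv_mul_cancel_left] at this
  have h123 := triple_symm ST h123'
  have S34 : Commute a12 a34 := by
    have := SQ.inv_right.mul_right (ST.mul_right SP)
    rwa [show (a13 * (a23 * (a14 * a24)))⁻¹ * (a13 * a23 * (a14 * (a24 * a34))) = a34 by
      group] at this
  have S1424 : Commute a12 (a14 * a24) := by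
    have := ST.inv_right.mul_right SQ
    rwa [show (a13 * a23)⁻¹ * (a13 * (a23 * (a14 * a24))) = a14 * a24 by group] at this
  have R23 : Commute (a12 * (a13 * a14)) a23 := by
    have := RUP.inv_right.mul_right RZ
    rw [hZ, ← mul_assoc a12 (a13) a23] at this
    have e : (a12 * a13 * (a14 * (a24 * a34)))⁻¹ * (a12 * a13 * a23 * (a14 * (a24 * a34)))
        = (a14 * (a24 * a34))⁻¹ * a23 * (a14 * (a24 * a34)) := by group
    have P23 : Commute (a14 * (a24 * a34)) a23 := by
      have := (UP.symm.inv_right).mul_right (SP.symm.mul_right TP.symm)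
      rwa [show (a12 * a13)⁻¹ * (a12 * (a13 * a23)) = a23 by group] at this
    rwa [e, mul_assoc, ← P23.eq, inv_mul_cancel_left] at this
  have a23_14 : Commute a23 a14 := by
    have := h123.inv_right.mul_right R23.symm
    rwa [show (a12 * a13)⁻¹ * (a12 * (a13 * a14)) = a14 by group] at this
  have a14_m : Commute a14 (a14 * a24 * a12) := by
    have := L.inv_right
    rw [last_eq SQ, show a13⁻¹ * a12⁻¹ * (a14⁻¹ * a13⁻¹ * a12⁻¹)⁻¹ = a14 by group] at this
    have := a23_14.symm.inv_right.mul_right this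
    rwa [inv_mul_cancel_left] at this
  have h124' : Commute a14 (a12 * (a14 * a24)) := by rwa [S1424.eq]
  have h124 := triple_symm S1424 h124'
  have R34 : Commute (a12 * (a13 * a14)) a34 := by
    have := RSQ.inv_right.mul_right RZ
    rwa [show (a12 * (a13 * (a23 * (a14 * a24))))⁻¹ * Z = a34 by rw [hZ]; group] at this
  have h134 : Commute a34 (a13 * a14) := by
    have := S34.symm.inv_right.mul_right R34.symm
    rwa [inv_mul_cancel_left] at this
  -- conjugating by `a34`, which commutes with `Z`, moves the last factor `a34` to the front
  have eZ : Z = a34 * a13 * a23 * (a14 * a24 * a12) := by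
    have : Z = a13 * a23 * (a14 * a24 * a12) * a34 := by
      rw [hZ, mul_assoc, (ST.mul_right SP).eq]
      simp only [mul_assoc, S34.eq]
    have := (a34Z.inv_left.eq.trans (congrArg (· * a34⁻¹) this))
    rw [mul_inv_cancel_right, inv_mul_eq_iff_eq_mul] at this
    simpa only [mul_assoc] using this
  have a14_3413 : Commute a14 (a34 * a13) := by
    have := a14Z.mul_right (a23_14.symm.mul_right a14_m).inv_right
    rwa [eZ, show a34 * a13 * a23 * (a14 * a24 * a12) * (a23 * (a14 * a24 * a12))⁻¹
      = a34 * a13 by group] at this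
  have h134' : Commute a14 (a13 * (a14 * a34)) := by
    rw [← mul_assoc, ← h134.eq, ← mul_assoc]
    exact a14_3413.mul_right (.refl _)
  have a13_1434 := (triple h134 h134').1
  have e234 : (a12 * (a13 * a14))⁻¹ * Z = a23 * (a24 * a34) := by
    have : Z = a12 * (a13 * (a23 * a14 * (a24 * a34))) := by rw [hZ]; group
    rw [this, a23_14.eq]; group
  have d23 : Commute a23 (a23 * (a24 * a34)) := by
    rw [← e234]; exact R23.symm.inv_right.mul_right a23Z
  have d34 : Commute a34 (a23 * (a24 * a34)) := by
    rw [← e234]; exact R34.symm.inv_right.mul_right a34Z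
  have h234' : Commute a24 (a23 * (a24 * a34)) := by
    have := (d23.inv_left.mul_left (Commute.refl (a23 * (a24 * a34)))).mul_left d34.inv_left
    rwa [show a23⁻¹ * (a23 * (a24 * a34)) * a34⁻¹ = a24 by group] at this
  have h234 : Commute a34 (a23 * a24) := by
    have := d34.mul_right (Commute.refl a34).inv_right
    rwa [show a23 * (a24 * a34) * a34⁻¹ = a23 * a24 by group] at this
  have hP13 : Commute a13 (a14 * (a24 * a34)) := by
    have := SP.inv_left.mul_left UP
    rwa [inv_mul_cancel_left] at this
  have h1324 : Commute a24 (a34 * a13 * a34⁻¹) := by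
    have := a13_1434.inv_right.mul_right hP13
    have := ((Commute.conj_iff a34).2 this).symm
    rwa [show a34 * ((a14 * a34)⁻¹ * (a14 * (a24 * a34))) * a34⁻¹ = a24 by group] at this
  exact ⟨h123, h123', h124, h124', h134, h134', h234, h234', S34, a23_14, h1324⟩

/-- The elements `aij` recovered from the elements `s, t, u, p, q, r` by inverting the triangular substitution. -/
lemma CRel.pureRel {s t u p q r : G} (h : CRel s t u p q r) :
    PureRel s⁻¹ (s * u⁻¹) (u * r⁻¹) (u * s⁻¹ * t⁻¹) (r * u⁻¹ * t * q⁻¹) (q * t⁻¹ * p⁻¹) := by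
  apply CRel.pureRel'
  convert h using 1 <;> group

lemma conj_iff (a b c : G) : b⁻¹ * a * b * (c * a * c⁻¹)⁻¹ = 1 ↔ Commute a (b * c) := by
  rw [mul_inv_eq_one, commute_iff_eq, mul_assoc, inv_mul_eq_iff_eq_mul, ← mul_assoc,
    eq_mul_inv_iff_mul_eq]
  simp only [mul_assoc]

lemma cj_iff (a b c : G) : cj a b * (cj a c)⁻¹ = 1 ↔ Commute a (b * c⁻¹) := by
  rw [← conj_iff, cj, cj, inv_inv]

lemma cj_iff' (a b : G) : cj a b * a⁻¹ = 1 ↔ Commute a b := by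
  simpa [cj] using cj_iff a b 1


lemma triple_zpow {x y z : G} (h1 : Commute z (x * y)) (h2 : Commute y (x * (y * z))) (e : ℤ) :
    Commute z (x ^ e * (y * z) ^ e) ∧ Commute y (x ^ e * (y * z) ^ e) := by
  rw [← (triple h1 h2).1.mul_zpow]
  refine ⟨Commute.zpow_right ?_ e, h2.zpow_right e⟩
  rw [← mul_assoc]; exact h1.mul_right (.refl z)

lemma triple_of {x y z : G} (h1 : Commute z (x * (y * z))) : Commute z (x * y) := by
  have := h1.mul_right (Commute.refl z).inv_right
  rwa [show x * (y * z) * z⁻¹ = x * y by group] at this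

/-- Under the relations of the triple `1 < 3 < 4`, the commutator in the
last family of pure braid relations only encodes a conjugation. -/
lemma cm_eq {a13 a14 a34 : G} (h : Commute a34 (a13 * a14)) :
    a13 * cm a14⁻¹ a34⁻¹ = a34 * a13 * a34⁻¹ := by
  calc _ = a13 * a14 * a34 * a14⁻¹ * a34⁻¹ := by simp only [cm]; group
    _ = _ := by rw [← h.eq]; group

lemma cm_eq' {a13 a14 a34 : G} (h : Commute a34 (a13 * a14))
    (h' : Commute a14 (a13 * (a14 * a34))) :
    a13⁻¹ * (cm a14 a34)⁻¹ = (a34 * a13 * a34⁻¹)⁻¹ := by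
  have hx := (triple h h').1
  rw [← mul_inv_rev, inv_inj]
  calc _ = a14⁻¹ * a34⁻¹ * (a14 * a34 * a13) := by simp only [cm]; group
    _ = a14⁻¹ * a34⁻¹ * (a13 * a14 * a34) := by rw [← hx.eq, mul_assoc a13]
    _ = a14⁻¹ * (a13 * a14 * a34) * a34⁻¹ := by nth_rewrite 1 [← h.eq]; group
    _ = a14⁻¹ * (a14 * a34 * a13) * a34⁻¹ := by rw [← hx.eq, mul_assoc a13]
    _ = _ := by group

lemma map_cm {H : Type*} [Group H] (φ : G →* H) (a b : G) : φ (cm a b) = cm (φ a) (φ b) := by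
  simp [cm]

lemma map_cj {H : Type*} [Group H] (φ : G →* H) (a b : G) : φ (cj a b) = cj (φ a) (φ b) := by
  simp [cj]

lemma conj_zpow_iff (a b c : G) (e : ℤ) :
    b ^ (-e) * a * b ^ e * (c ^ e * a * c ^ (-e))⁻¹ = 1 ↔ Commute a (b ^ e * c ^ e) := by
  rw [zpow_neg, zpow_neg, conj_iff]

lemma conj_zpow_iff' (a b : G) (e : ℤ) :
    b ^ (-e) * a * b ^ e * a⁻¹ = 1 ↔ Commute a (b ^ e) := by
  simpa using conj_iff a (b ^ e) 1

/-- A homomorphism on the free group kills the pure braid relators exactly when the images of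
the generators satisfy `PureRel`. -/
lemma p4Rels_iff (φ : FreeGroup PGen →* G) :
    (∀ r ∈ P4Rels, φ r = 1) ↔ PureRel (φ (fA 1 2)) (φ (fA 1 3)) (φ (fA 1 4)) (φ (fA 2 3))
      (φ (fA 2 4)) (φ (fA 3 4)) := by
  constructor
  · intro h
    have T (i k j : ℕ) (hi : 1 ≤ i) (hik : i < k) (hkj : k < j) (hj : j ≤ 4) :
        Commute (φ (fA k j)) (φ (fA i k) * φ (fA i j)) := by
      have := h _ ⟨1, .inl rfl, .inl ⟨i, k, j, hi, hik, hkj, hj, rfl⟩⟩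
      simp only [map_mul, map_inv, map_zpow, conj_zpow_iff] at this
      simp only [zpow_one] at this
      exact triple_of this
    have T' (i k j : ℕ) (hi : 1 ≤ i) (hik : i < k) (hkj : k < j) (hj : j ≤ 4) :
        Commute (φ (fA i j)) (φ (fA i k) * (φ (fA i j) * φ (fA k j))) := by
      have := h _ ⟨1, .inl rfl, .inr (.inl ⟨i, k, j, hi, hik, hkj, hj, rfl⟩)⟩
      simp only [map_mul, map_inv, map_zpow, conj_zpow_iff] at this
      simpa only [zpow_one] using this
    have K (i m k j : ℕ) (hi : 1 ≤ i) (him : i < m) (hm : m ≤ 4) (hk : 1 ≤ k) (hkj : k < j)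
        (hj : j ≤ 4) (hh : (k < i ∧ m < j) ∨ m < k) : Commute (φ (fA k j)) (φ (fA i m)) := by
      have := h _ ⟨1, .inl rfl, .inr (.inr (.inr ⟨i, m, k, j, hi, him, hm, hk, hkj, hj, hh, rfl⟩))⟩
      simp only [map_mul, map_inv, map_zpow, conj_zpow_iff'] at this
      simpa only [zpow_one] using this
    have h134 := T 1 3 4 (by simp) (by simp) (by simp) (by simp)
    refine ⟨T 1 2 3 ?_ ?_ ?_ ?_, T' 1 2 3 ?_ ?_ ?_ ?_, T 1 2 4 ?_ ?_ ?_ ?_, T' 1 2 4 ?_ ?_ ?_ ?_,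
      h134, T' 1 3 4 ?_ ?_ ?_ ?_, T 2 3 4 ?_ ?_ ?_ ?_,
      T' 2 3 4 ?_ ?_ ?_ ?_, (K 1 2 3 4 ?_ ?_ ?_ ?_ ?_ ?_ ?_).symm,
      (K 2 3 1 4 ?_ ?_ ?_ ?_ ?_ ?_ ?_).symm, ?_⟩
    on_goal -1 =>
      have := h _ ⟨1, .inl rfl, .inr (.inr (.inl ⟨1, 2, 3, 4, by simp, by simp, by simp, by simp,
        by simp, rfl⟩))⟩
      simp only [map_mul, map_inv, map_zpow, conj_zpow_iff, map_cm] at this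
      simp only [zpow_one, zpow_neg, cm_eq h134] at this
      exact this
    all_goals simp
  · rintro ⟨h123, h123', h124, h124', h134, h134', h234, h234', h1234, h2314, h1324⟩
    rintro r ⟨e, he, ⟨i, k, j, hi, hik, hkj, hj, rfl⟩ | ⟨i, k, j, hi, hik, hkj, hj, rfl⟩ |
      ⟨i, k, m, j, hi, hik, hkm, hmj, hj, rfl⟩ | ⟨i, m, k, j, hi, him, hm, hk, hkj, hj, hh, rfl⟩⟩
    · simp only [map_mul, map_inv, map_zpow, conj_zpow_iff]
      obtain ⟨rfl, rfl, rfl⟩ | ⟨rfl, rfl, rfl⟩ | ⟨rfl, rfl, rfl⟩ | ⟨rfl, rfl, rfl⟩ :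
        (i = 1 ∧ k = 2 ∧ j = 3) ∨ (i = 1 ∧ k = 2 ∧ j = 4) ∨ (i = 1 ∧ k = 3 ∧ j = 4) ∨
        (i = 2 ∧ k = 3 ∧ j = 4) := by omega
      exacts [(triple_zpow h123 h123' e).1, (triple_zpow h124 h124' e).1,
        (triple_zpow h134 h134' e).1, (triple_zpow h234 h234' e).1]
    · simp only [map_mul, map_inv, map_zpow, conj_zpow_iff]
      obtain ⟨rfl, rfl, rfl⟩ | ⟨rfl, rfl, rfl⟩ | ⟨rfl, rfl, rfl⟩ | ⟨rfl, rfl, rfl⟩ :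
        (i = 1 ∧ k = 2 ∧ j = 3) ∨ (i = 1 ∧ k = 2 ∧ j = 4) ∨ (i = 1 ∧ k = 3 ∧ j = 4) ∨
        (i = 2 ∧ k = 3 ∧ j = 4) := by omega
      exacts [(triple_zpow h123 h123' e).2, (triple_zpow h124 h124' e).2,
        (triple_zpow h134 h134' e).2, (triple_zpow h234 h234' e).2]
    · obtain ⟨rfl, rfl, rfl, rfl⟩ : i = 1 ∧ k = 2 ∧ m = 3 ∧ j = 4 := by omega
      simp only [map_mul, map_inv, map_zpow, conj_zpow_iff, map_cm]
      rcases he with rfl | rfl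
      · simpa only [zpow_one, zpow_neg, cm_eq h134] using h1324
      · simpa only [zpow_one, zpow_neg, neg_neg, cm_eq' h134 h134'] using h1324.inv_right
    · simp only [map_mul, map_inv, map_zpow, conj_zpow_iff']
      apply Commute.zpow_right
      obtain ⟨rfl, rfl, rfl, rfl⟩ | ⟨rfl, rfl, rfl, rfl⟩ : (i = 2 ∧ m = 3 ∧ k = 1 ∧ j = 4) ∨
        (i = 1 ∧ m = 2 ∧ k = 3 ∧ j = 4) := by omega
      exacts [h2314.symm, h1234.symm]

/-- Under the other relations, each of the two long relations of the second presentation is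
equivalent to `CRel.last`. -/
lemma long_iff {s t u p q r : G} (st : Commute s t) (sq : Commute s q) (up : Commute u p)
    (ust : Commute u (s * t)) (rsq : Commute r (s * q)) (rup : Commute r (u * p)) :
    (cj q u⁻¹ * (cj r p * (cj r q)⁻¹ * q * cm (t ^ (2 : ℤ)) u⁻¹)⁻¹ = 1 ↔
      Commute (u * r⁻¹) (s ^ 2 * q * u⁻¹)) ∧
    (cj q u * (cm u (t ^ (-2 : ℤ)) * (cj r (q ^ (-2 : ℤ)))⁻¹ * q * cj r p⁻¹)⁻¹ = 1 ↔
      Commute (u * r⁻¹) (s ^ 2 * q * u⁻¹)) := by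
  have key : Commute (u * r⁻¹) (s ^ 2 * q * u⁻¹) ↔ u * r⁻¹ * (s ^ 2 * q) = s ^ 2 * q * r⁻¹ * u := by
    rw [commute_iff_eq, ← mul_assoc, mul_inv_eq_iff_eq_mul]
    simp only [mul_assoc, inv_mul_cancel_left]
  have A1 : cj r p = u * r * u⁻¹ := by
    have h := rup.eq
    rw [up.eq] at h
    rw [cj, eq_mul_inv_iff_mul_eq, mul_assoc, mul_assoc, inv_mul_eq_iff_eq_mul, h, mul_assoc]
  have A2 : cj r p⁻¹ = u⁻¹ * r * u := by
    have h := rup.eq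
    rw [cj, inv_inv, mul_inv_eq_iff_eq_mul, mul_assoc, mul_assoc, eq_inv_mul_iff_mul_eq, h,
      mul_assoc]
  have u2 : Commute u (s ^ 2 * t ^ 2) := by rw [← st.mul_pow]; exact ust.pow_right 2
  have r2 : Commute r⁻¹ (s ^ 2 * q ^ 2) := by rw [← sq.mul_pow]; exact (rsq.pow_right 2).inv_left
  have st2 : Commute (s ^ 2) (t ^ 2) := st.pow_pow 2 2
  have sq2 : Commute (s ^ 2) (q ^ 2) := sq.pow_pow 2 2
  have sq1 : Commute (s ^ 2) q := sq.pow_left 2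
  have B1 : cm (t ^ 2) u⁻¹ = s ^ 2 * u * (s ^ 2)⁻¹ * u⁻¹ := by
    have h := u2.eq
    rw [cm, inv_inv]
    congr 1
    rw [mul_assoc, inv_mul_eq_iff_eq_mul, ← mul_assoc, eq_mul_inv_iff_mul_eq, ← mul_assoc,
      ← st2.eq, mul_assoc u, ← st2.eq, h]
  have B2 : cm u (t ^ 2)⁻¹ = u⁻¹ * ((s ^ 2)⁻¹ * u * s ^ 2) := by
    have h := u2.eq
    rw [cm, inv_inv, mul_assoc, mul_assoc]
    congr 1
    rw [← mul_assoc, mul_inv_eq_iff_eq_mul, mul_assoc, mul_assoc, eq_inv_mul_iff_mul_eq,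
      ← mul_assoc, h]
  have e2 (x : G) : x ^ (2 : ℤ) = x ^ 2 := zpow_ofNat x 2
  rw [key, zpow_neg, zpow_neg, e2, e2, A1, A2, B1, B2, mul_inv_eq_one, mul_inv_eq_one]
  constructor
  · have : u * r * u⁻¹ * (cj r q)⁻¹ * q * (s ^ 2 * u * (s ^ 2)⁻¹ * u⁻¹)
        = u * (r * u⁻¹ * (s ^ 2 * q) * r⁻¹ * u) * (s ^ 2)⁻¹ * u⁻¹ := by
      calc _ = u * r * u⁻¹ * q⁻¹ * (r⁻¹ * (q ^ 2 * s ^ 2)) * u * (s ^ 2)⁻¹ * u⁻¹ := by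
            simp only [cj, pow_two]; group
        _ = u * r * u⁻¹ * q⁻¹ * (q * (q * s ^ 2) * r⁻¹) * u * (s ^ 2)⁻¹ * u⁻¹ := by
            rw [← sq2.eq, r2.eq, sq2.eq, pow_two q, mul_assoc q]
        _ = _ := by rw [← sq1.eq]; group
    have e : cj q u⁻¹ = u * (s ^ 2 * q) * (s ^ 2)⁻¹ * u⁻¹ := by
      rw [sq1.eq, cj]; group
    rw [this, e, mul_left_inj, mul_left_inj, mul_right_inj]
    rw [show r * u⁻¹ * (s ^ 2 * q) * r⁻¹ * u = (u * r⁻¹)⁻¹ * (s ^ 2 * q * r⁻¹ * u) by group,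
      eq_inv_mul_iff_mul_eq]
  · have : u⁻¹ * ((s ^ 2)⁻¹ * u * s ^ 2) * (cj r (q ^ 2)⁻¹)⁻¹ * q * (u⁻¹ * r * u)
        = u⁻¹ * (s ^ 2)⁻¹ * ((u * r⁻¹ * (s ^ 2 * q)) * (r⁻¹ * u)⁻¹ * u) := by
      calc _ = u⁻¹ * (s ^ 2)⁻¹ * u * (s ^ 2 * q ^ 2 * r⁻¹) * q⁻¹ * u⁻¹ * r * u := by
            simp only [cj]; group
        _ = _ := by rw [← r2.eq]; group
    have e : cj q u = u⁻¹ * (s ^ 2)⁻¹ * (s ^ 2 * q * u) := by rw [cj]; group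
    rw [this, e, mul_right_inj, mul_left_inj, eq_mul_inv_iff_mul_eq, ← mul_assoc, eq_comm]

open FreeGroup (of) in
open CGen in
/-- A homomorphism on the free group kills the relators of the second presentation exactly when
the images of the generators satisfy `CRel`. -/
lemma rels_iff (φ : FreeGroup CGen →* G) :
    (∀ r ∈ CGen.rels, φ r = 1) ↔ CRel (φ (of x11)) (φ (of x21)) (φ (of x12)) (φ (of x31))
      (φ (of x22)) (φ (of x13)) := by
  set s := φ (of x11)
  set t := φ (of x21)
  set u := φ (of x12)
  set p := φ (of x31)
  set q := φ (of x22)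
  set r := φ (of x13)
  constructor
  · intro h
    have h1 := h _ (.inr (.inl rfl))
    have h := fun x hx => h x (.inl ⟨1, .inl rfl, hx⟩)
    simp only [List.forall_mem_cons, map_mul, map_inv, map_zpow, map_cj, cj_iff, cj_iff'] at h
    simp only [map_mul, map_inv, map_zpow, map_cj, map_cm] at h1
    simp only [zpow_one, zpow_neg, inv_inv] at h
    obtain ⟨st, us, ps, qs, rsq, pt, qtp, rt, pu, rup, -⟩ := h
    have hst : Commute s t := st.symm
    refine ⟨hst, ps.symm, qs.symm, pt.symm, pu.symm, us, qtp, rsq, rup, ?_, ?_⟩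
    · have e : t * (q * p⁻¹)⁻¹ = q⁻¹ * (t * p) := by
        rw [qtp.inv_left.eq, mul_inv_rev, inv_inv, mul_assoc]
      rw [e] at rt
      have := rsq.mul_right rt
      rwa [show s * q * (q⁻¹ * (t * p)) = s * t * p by group] at this
    · exact (long_iff hst qs.symm pu.symm us rsq rup).1.1 h1
  · rintro ⟨st, sp, sq, tp, up, ust, qtp, rsq, rup, rz, l⟩
    have hl := long_iff st sq up ust rsq rup
    rintro x (⟨e, he, hx⟩ | rfl | rfl)
    · revert x
      simp only [List.forall_mem_cons, map_mul, map_inv, map_zpow, map_cj, cj_iff, cj_iff']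
      refine ⟨st.symm.zpow_right e, ?_, sp.symm.zpow_right e, sq.symm.zpow_right e, ?_,
        tp.symm.zpow_right e, ?_, ?_, up.symm.zpow_right e, ?_, by simp⟩
      all_goals simp only [zpow_neg, inv_inv, mul_inv_rev]
      · rw [← st.mul_zpow]; exact ust.zpow_right e
      · rw [← sq.mul_zpow]; exact rsq.zpow_right e
      · rw [← tp.mul_zpow]; exact qtp.zpow_right e
      · have e1 : r * (t * p * q⁻¹) = t * p * q⁻¹ * r := by
          have := rsq.inv_right.mul_right rz
          rw [show (s * q)⁻¹ * (s * t * p) = q⁻¹ * (t * p) by group, qtp.inv_left.eq] at this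
          exact this
        rw [← mul_assoc, ← tp.mul_zpow, ← inv_zpow, ← qtp.inv_left.symm.mul_zpow]
        exact Commute.zpow_right e1 e
      · rw [← up.mul_zpow]; exact rup.zpow_right e
    · simpa only [map_mul, map_inv, map_zpow, map_cj, map_cm] using hl.1.2 l
    · simpa only [map_mul, map_inv, map_zpow, map_cj, map_cm] using hl.2.2 l

end Commutation

/-! ### Homomorphisms out of the two presented groups -/

section Presentation

variable {G : Type*} [Group G]

lemma mk_fA (i j : ℕ) : PresentedGroup.mk P4Rels (fA i j) = pA i j := by
  unfold fA pA; split <;> simp [PresentedGroup.of]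

lemma pureRel_pA : PureRel (pA 1 2) (pA 1 3) (pA 1 4) (pA 2 3) (pA 2 4) (pA 3 4) := by
  simpa only [mk_fA] using
    (p4Rels_iff (PresentedGroup.mk P4Rels)).1 fun _ hr => PresentedGroup.one_of_mem hr

lemma cRel_of : CRel (PresentedGroup.of (rels := CGen.rels) .x11) (PresentedGroup.of .x21)
    (PresentedGroup.of .x12) (PresentedGroup.of .x31) (PresentedGroup.of .x22)
    (PresentedGroup.of .x13) :=
  (rels_iff (PresentedGroup.mk CGen.rels)).1 fun _ hr => PresentedGroup.one_of_mem hr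

/-- Elements satisfying `CRel` receive a homomorphism from the second presentation. -/
lemma exists_homC {s t u p q r : G} (h : CRel s t u p q r) :
    ∃ f : PresentedGroup CGen.rels →* G,
      f (.of .x11) = s ∧ f (.of .x21) = t ∧ f (.of .x12) = u ∧
      f (.of .x31) = p ∧ f (.of .x22) = q ∧ f (.of .x13) = r := by
  let v : CGen → G
    | .x11 => s | .x21 => t | .x12 => u | .x31 => p | .x22 => q | .x13 => r
  have hv : ∀ x ∈ CGen.rels, FreeGroup.lift v x = 1 :=
    (rels_iff (FreeGroup.lift v)).2 (by simpa only [FreeGroup.lift_apply_of] using h)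
  exact ⟨PresentedGroup.toGroup hv, by simp only [PresentedGroup.toGroup.of]; simp [v]⟩

/-- Elements satisfying `PureRel` receive a homomorphism from `P4`. -/
lemma exists_homA {a12 a13 a14 a23 a24 a34 : G} (h : PureRel a12 a13 a14 a23 a24 a34) :
    ∃ g : P4 →* G, g (pA 1 2) = a12 ∧ g (pA 1 3) = a13 ∧ g (pA 1 4) = a14 ∧
      g (pA 2 3) = a23 ∧ g (pA 2 4) = a24 ∧ g (pA 3 4) = a34 := by
  let v : PGen → G := fun x => match x.1 with
    | (1, 2) => a12 | (1, 3) => a13 | (1, 4) => a14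
    | (2, 3) => a23 | (2, 4) => a24 | (3, 4) => a34
    | _ => 1
  have hv : ∀ x ∈ P4Rels, FreeGroup.lift v x = 1 :=
    (p4Rels_iff (FreeGroup.lift v)).2 (by simpa [fA, v] using h)
  exact ⟨PresentedGroup.toGroup hv, by simp [pA, v]⟩

lemma P4_hom_ext {g g' : P4 →* G} (h12 : g (pA 1 2) = g' (pA 1 2)) (h13 : g (pA 1 3) = g' (pA 1 3))
    (h14 : g (pA 1 4) = g' (pA 1 4)) (h23 : g (pA 2 3) = g' (pA 2 3))
    (h24 : g (pA 2 4) = g' (pA 2 4)) (h34 : g (pA 3 4) = g' (pA 3 4)) : g = g' := by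
  apply PresentedGroup.ext
  rintro ⟨⟨i, j⟩, hij⟩
  have e : (PresentedGroup.of ⟨(i, j), hij⟩ : P4) = pA i j := by
    simp only at hij; simp [pA, hij]
  simp only at hij
  rw [e]
  obtain ⟨rfl, rfl⟩ | ⟨rfl, rfl⟩ | ⟨rfl, rfl⟩ | ⟨rfl, rfl⟩ | ⟨rfl, rfl⟩ | ⟨rfl, rfl⟩ :
    (i = 1 ∧ j = 2) ∨ (i = 1 ∧ j = 3) ∨ (i = 1 ∧ j = 4) ∨ (i = 2 ∧ j = 3) ∨ (i = 2 ∧ j = 4) ∨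
    (i = 3 ∧ j = 4) := by omega
  all_goals assumption

end Presentation

/-- Proposition 4.1: `P_4` is generated by `c_{11}, c_{21}, c_{12}, c_{31}, c_{22}, c_{13}`,
and the map sending the abstract generators `x_{ij}` to the `c_{ij}` induces an isomorphism
onto `P_4` from the group presented by these six generators and the listed relations. -/
theorem statement2 :
    Subgroup.closure {c11, c21, c12, c31, c22, c13} = (⊤ : Subgroup P4) ∧
    ∃ f : PresentedGroup CGen.rels →* P4,
      f (PresentedGroup.of CGen.x11) = c11 ∧
      f (PresentedGroup.of CGen.x21) = c21 ∧
      f (PresentedGroup.of CGen.x12) = c12 ∧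
      f (PresentedGroup.of CGen.x31) = c31 ∧
      f (PresentedGroup.of CGen.x22) = c22 ∧
      f (PresentedGroup.of CGen.x13) = c13 ∧
      Function.Bijective f := by
  obtain ⟨f, f1, f2, f3, f4, f5, f6⟩ := exists_homC pureRel_pA.cRel
  obtain ⟨g, g12, g13, g14, g23, g24, g34⟩ := exists_homA cRel_of.pureRel
  have hgf : g.comp f = MonoidHom.id _ := by
    apply PresentedGroup.ext
    rintro (_ | _ | _ | _ | _ | _)
    all_goals
      simp only [MonoidHom.comp_apply, MonoidHom.id_apply, f1, f2, f3, f4, f5, f6, map_mul,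
        map_inv, g12, g13, g14, g23, g24, g34]
      group
  have hfg : f.comp g = MonoidHom.id _ := by
    apply P4_hom_ext
    all_goals
      simp only [MonoidHom.comp_apply, MonoidHom.id_apply, f1, f2, f3, f4, f5, f6, map_mul,
        map_inv, g12, g13, g14, g23, g24, g34]
      group
  have hf : Function.Surjective f := fun y => ⟨g y, DFunLike.congr_fun hfg y⟩
  refine ⟨?_, f, f1, f2, f3, f4, f5, f6,
    Function.LeftInverse.injective (g := g) (DFunLike.congr_fun hgf), hf⟩
  rw [eq_top_iff, ← Subgroup.map_top_of_surjective f hf,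
    ← PresentedGroup.closure_range_of CGen.rels, MonoidHom.map_closure]
  apply Subgroup.closure_mono
  rintro _ ⟨_, ⟨x, rfl⟩, rfl⟩
  cases x <;> simp [f1, f2, f3, f4, f5, f6, c11, c21, c12, c31, c22, c13]

end Paper
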